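/- arXiv:0803.1641 — 2 statements merged into one kernel-verified Lean document; each statement's English description precedes it below -/
import Mathlib

section
/- Let A and B be countable torsion abelian groups and let n ≥ 1. If the direct sum of 2^n copies of A is isomorphic to the direct sum of 2^n copies of B, then A is isomorphic to B. -/
namespace Ulm

/-- transfinite `q`-power filtration -/
noncomputable def PP {A : Type*} [AddCommGroup A] (q : ℕ) (α : Ordinal.{0}) : AddSubgroup A :=
  ⨅ β : Set.Iio α, (PP q β.1).map (nsmulAddMonoidHom q)
termination_by α
decreasing_by exact β.2

section basic
variable {A B : Type*} [AddCommGroup A] [AddCommGroup B]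

lemma mem_PP {q : ℕ} {α : Ordinal.{0}} {x : A} :
    x ∈ PP q α ↔ ∀ β < α, ∃ y ∈ PP (A := A) q β, q • y = x := by
  rw [PP]
  simp [AddSubgroup.mem_iInf, AddSubgroup.mem_map]

lemma PP_anti {q : ℕ} {α β : Ordinal.{0}} (h : α ≤ β) : PP (A := A) q β ≤ PP q α := by
  intro x hx
  rw [mem_PP] at hx ⊢
  exact fun γ hγ => hx γ (hγ.trans_le h)

lemma mem_PP_succ {q : ℕ} {α : Ordinal.{0}} {x : A} :
    x ∈ PP q (Order.succ α) ↔ ∃ y ∈ PP (A := A) q α, q • y = x := by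
  rw [mem_PP]
  constructor
  · intro h
    exact h α (Order.lt_succ α)
  · rintro ⟨y, hy, rfl⟩ β hβ
    exact ⟨y, PP_anti (Order.le_of_lt_succ hβ) hy, rfl⟩

lemma smul_mem_PP {q : ℕ} {α : Ordinal.{0}} {x : A} (h : x ∈ PP q α) :
    q • x ∈ PP q (Order.succ α) := mem_PP_succ.2 ⟨x, h, rfl⟩

lemma PP_map (f : A →+ B) (q : ℕ) (α : Ordinal.{0}) : ∀ x ∈ PP (A := A) q α, f x ∈ PP q α := by
  induction α using WellFoundedLT.induction with
  | _ α ih =>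
    intro x hx
    rw [mem_PP] at hx ⊢
    intro β hβ
    obtain ⟨y, hy, rfl⟩ := hx β hβ
    exact ⟨f y, ih β hβ y hy, by simp⟩

lemma PP_equiv (e : A ≃+ B) (q : ℕ) (α : Ordinal.{0}) (x : A) :
    e x ∈ PP (A := B) q α ↔ x ∈ PP q α := by
  constructor
  · intro h
    simpa using PP_map e.symm.toAddMonoidHom q α _ h
  · exact PP_map e.toAddMonoidHom q α x

lemma PP_pi {ι : Type*} (q : ℕ) (α : Ordinal.{0}) :
    ∀ x : ι → A, x ∈ PP (A := ι → A) q α ↔ ∀ i, x i ∈ PP q α := by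
  induction α using WellFoundedLT.induction with
  | _ α ih =>
    intro x
    constructor
    · intro h i
      exact PP_map (Pi.evalAddMonoidHom (fun _ => A) i) q α x h
    · intro h
      rw [mem_PP]
      intro β hβ
      choose y hy hyx using fun i => mem_PP.1 (h i) β hβ
      exact ⟨y, (ih β hβ y).2 hy, funext hyx⟩

/-- division by integers coprime to `p` -/
lemma PP_div {p q : ℕ} (hpq : Nat.Coprime q p) (α : Ordinal.{0}) :
    ∀ x : A, q • x ∈ PP (A := A) p α → x ∈ PP p α := by
  induction α using WellFoundedLT.induction with
  | _ α ih =>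
    intro x hx
    rw [mem_PP] at hx ⊢
    intro β hβ
    obtain ⟨y, hy, hyx⟩ := hx β hβ
    have hxβ : x ∈ PP p β := by
      apply ih β hβ
      rw [← hyx]
      exact AddSubgroup.nsmul_mem _ hy _
    have hb := Nat.gcd_eq_gcd_ab q p
    rw [hpq.gcd_eq_one] at hb
    refine ⟨Nat.gcdA q p • y + Nat.gcdB q p • x,
      add_mem (zsmul_mem hy _) (zsmul_mem hxβ _), ?_⟩
    have h1 : x = ((1 : ℕ) : ℤ) • x := by simp
    conv_rhs => rw [h1, hb]
    rw [smul_add, add_smul, mul_comm (q : ℤ), mul_smul, mul_smul]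
    rw [natCast_zsmul, ← hyx, natCast_zsmul, smul_comm]

lemma exists_stable [Countable A] (q : ℕ) : ∃ l : Ordinal.{0}, ∀ β, l ≤ β → 
    PP (A := A) q β = PP q l := by
  have h1 : ∃ l : Ordinal.{0}, PP (A := A) q l ≤ PP q (Order.succ l) := by
    by_contra! hcon
    have : ∀ l : Ordinal.{0}, ∃ x : A, x ∈ PP q l ∧ x ∉ PP q (Order.succ l) := fun l =>
      SetLike.not_le_iff_exists.1 (hcon l)
    choose f hf hf' using this
    apply not_injective_of_ordinal f
    intro a b hab
    by_contra hne
    rcases lt_or_gt_of_ne hne with h | h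
    · exact hf' a (hab ▸ PP_anti (Order.succ_le_of_lt h) (hf b))
    · exact hf' b (hab ▸ PP_anti (Order.succ_le_of_lt h) (hf a))
  obtain ⟨l, hl⟩ := h1
  refine ⟨l, fun β hβ => le_antisymm (PP_anti hβ) ?_⟩
  induction β using WellFoundedLT.induction with
  | _ β ih =>
    intro x hx
    rw [mem_PP]
    intro γ hγ
    obtain ⟨y, hy, rfl⟩ := mem_PP_succ.1 (hl hx)
    refine ⟨y, ?_, rfl⟩
    rcases le_total l γ with h | h
    · exact ih γ hγ h hy
    · exact PP_anti h hy

lemma relIndex_pi {ι : Type*} [Fintype ι] (H K : AddSubgroup A) :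
    (AddSubgroup.pi Set.univ (fun _ : ι => H)).relIndex (AddSubgroup.pi Set.univ (fun _ : ι => K))
      = H.relIndex K ^ Fintype.card ι := by
  let φ : (ι → K) →+ (ι → A) := AddMonoidHom.compLeft K.subtype ι
  have hr : φ.range = AddSubgroup.pi Set.univ (fun _ : ι => K) := by
    ext x
    simp only [AddMonoidHom.mem_range, AddSubgroup.mem_pi]
    constructor
    · rintro ⟨y, rfl⟩ i _
      exact (y i).2
    · intro h
      exact ⟨fun i => ⟨x i, h i trivial⟩, rfl⟩
  have hc : (AddSubgroup.pi Set.univ (fun _ : ι => H)).comap φ =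
      AddSubgroup.pi Set.univ (fun _ : ι => H.addSubgroupOf K) := by
    ext x
    simp only [AddSubgroup.mem_comap, AddSubgroup.mem_pi, AddSubgroup.mem_addSubgroupOf]
    rfl
  rw [← hr, ← AddSubgroup.index_comap, hc, AddSubgroup.index_pi]
  simp [AddSubgroup.relIndex]

/-- `q`-torsion of the filtration -/
noncomputable def TT (A : Type*) [AddCommGroup A] (q : ℕ) (α : Ordinal.{0}) : AddSubgroup A :=
  PP q α ⊓ (nsmulAddMonoidHom q).ker

lemma mem_TT {q : ℕ} {α : Ordinal.{0}} {x : A} : x ∈ TT A q α ↔ x ∈ PP q α ∧ q • x = 0 := by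
  simp [TT, AddMonoidHom.mem_ker]

lemma relIndex_equiv (e : A ≃+ B) (H K : AddSubgroup A) (H' K' : AddSubgroup B)
    (hH : ∀ x, e x ∈ H' ↔ x ∈ H) (hK : ∀ x, e x ∈ K' ↔ x ∈ K) :
    H.relIndex K = H'.relIndex K' := by
  have h1 : H = H'.comap e.toAddMonoidHom := by
    ext x; simp [hH]
  have h2 : K' = K.map e.toAddMonoidHom := by
    ext x
    simp only [AddSubgroup.mem_map]
    constructor
    · intro hx
      exact ⟨e.symm x, (hK _).1 (by simpa using hx), by simp⟩
    · rintro ⟨y, hy, rfl⟩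
      exact (hK _).2 hy
  rw [h1, h2, AddSubgroup.relIndex_comap]

/-- equality of Ulm invariants -/
def Inv (A B : Type*) [AddCommGroup A] [AddCommGroup B] : Prop :=
  ∀ q : ℕ, ∀ α : Ordinal.{0},
    (PP q (Order.succ α)).relIndex (TT A q α) = (PP q (Order.succ α)).relIndex (TT B q α) ∧
    (⊥ : AddSubgroup A).relIndex (TT A q α) = (⊥ : AddSubgroup B).relIndex (TT B q α)

lemma Inv.symm (h : Inv A B) : Inv B A := fun q α => ⟨(h q α).1.symm, (h q α).2.symm⟩

lemma pi_PP (m : ℕ) (q : ℕ) (α : Ordinal.{0}) :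
    AddSubgroup.pi Set.univ (fun _ : Fin m => PP (A := A) q α) = PP q α := by
  ext x
  simp [AddSubgroup.mem_pi, PP_pi]

lemma pi_TT (m : ℕ) (q : ℕ) (α : Ordinal.{0}) :
    AddSubgroup.pi Set.univ (fun _ : Fin m => TT A q α) = TT (Fin m → A) q α := by
  ext x
  simp [AddSubgroup.mem_pi, mem_TT, PP_pi, funext_iff, forall_and]

lemma inv_of_pow {m : ℕ} (hm : m ≠ 0) (e : (Fin m → A) ≃+ (Fin m → B)) : Inv A B := by
  have heT : ∀ q α x, e x ∈ TT (Fin m → B) q α ↔ x ∈ TT (Fin m → A) q α := by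
    intro q α x
    rw [mem_TT, mem_TT, PP_equiv, ← map_nsmul, e.map_eq_zero_iff]
  intro q α
  constructor
  · have := relIndex_equiv e _ _ _ _ (PP_equiv e q (Order.succ α)) (heT q α)
    rw [← pi_PP, ← pi_TT, ← pi_PP, ← pi_TT, relIndex_pi, relIndex_pi, Fintype.card_fin] at this
    exact Nat.pow_left_injective hm this
  · have := relIndex_equiv e ⊥ _ ⊥ _ (by simp) (heT q α)
    rw [← AddSubgroup.pi_bot, ← AddSubgroup.pi_bot, ← pi_TT, ← pi_TT,
      relIndex_pi, relIndex_pi, Fintype.card_fin] at this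
    exact Nat.pow_left_injective hm this

lemma key_one (q : ℕ) (L H S : AddSubgroup A) (hHL : H ≤ L) :
    H.relIndex (S ⊓ (L ⊓ (H.map (nsmulAddMonoidHom q)).comap (nsmulAddMonoidHom q)))
      * ((H ⊔ S) ⊓ (L ⊓ (nsmulAddMonoidHom q).ker)).relIndex (L ⊓ (nsmulAddMonoidHom q).ker)
      = H.relIndex (L ⊓ (nsmulAddMonoidHom q).ker) := by
  set L' := L ⊓ (nsmulAddMonoidHom (α := A) q).ker with hL'
  set S' := (S ⊓ (L ⊓ (H.map (nsmulAddMonoidHom q)).comap (nsmulAddMonoidHom q))) with hS'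
  set K := (H ⊔ S) ⊓ L' with hK
  have e1 : K ⊔ H = S' ⊔ H := by
    apply le_antisymm
    · refine sup_le ?_ le_sup_right
      rintro k ⟨hk1, hk2, hk3⟩
      obtain ⟨v, hv, s, hs, rfl⟩ := AddSubgroup.mem_sup.1 hk1
      rw [add_comm]
      refine AddSubgroup.add_mem_sup ⟨hs, ?_, ?_⟩ hv
      · have := L.sub_mem hk2 (hHL hv)
        simpa using this
      · refine ⟨-v, neg_mem hv, ?_⟩
        have : q • (v + s) = 0 := hk3
        change q • (-v) = q • s
        rw [smul_neg, neg_eq_iff_add_eq_zero, ← smul_add, this]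
    · refine sup_le ?_ le_sup_right
      rintro s ⟨hs1, hs2, v, hv, hvs⟩
      have hvs' : q • v = q • s := hvs
      have : s = (s - v) + v := by abel
      rw [this]
      refine AddSubgroup.add_mem_sup ⟨?_, L.sub_mem hs2 (hHL hv), ?_⟩ hv
      · rw [sub_eq_neg_add]
        exact AddSubgroup.add_mem_sup (neg_mem hv) hs1
      · change q • (s - v) = 0
        rw [smul_sub, hvs', sub_self]
  have e2 : H.relIndex K = H.relIndex S' := by
    rw [← AddSubgroup.relIndex_sup_right, e1, AddSubgroup.relIndex_sup_right]
  have e3 : H ⊓ K = H ⊓ L' := by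
    rw [hK, ← inf_assoc, inf_eq_left.2 (le_sup_left : H ≤ H ⊔ S)]
  rw [← e2, ← AddSubgroup.inf_relIndex_right H K, ← AddSubgroup.inf_relIndex_right H L', ← e3]
  exact AddSubgroup.relIndex_mul_relIndex _ _ _ inf_le_right inf_le_right

lemma key (Γ : AddSubgroup (A × B)) (hfin : (Γ : Set (A × B)).Finite) (q : ℕ)
    (LA HA : AddSubgroup A) (LB HB : AddSubgroup B) (hA : HA ≤ LA) (hB : HB ≤ LB)
    (hL : ∀ c ∈ Γ, c.1 ∈ LA ↔ c.2 ∈ LB) (hH : ∀ c ∈ Γ, c.1 ∈ HA ↔ c.2 ∈ HB)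
    (hqH : ∀ c ∈ Γ, c.1 ∈ HA.map (nsmulAddMonoidHom q) ↔ c.2 ∈ HB.map (nsmulAddMonoidHom q))
    (hrel : HA.relIndex (LA ⊓ (nsmulAddMonoidHom q).ker) =
      HB.relIndex (LB ⊓ (nsmulAddMonoidHom q).ker))
    (u : A) (hu : u ∈ LA) (hqu : q • u = 0) (hun : ∀ c ∈ Γ, u + c.1 ∉ HA) :
    ∃ w ∈ LB, q • w = 0 ∧ ∀ c ∈ Γ, w + c.2 ∉ HB := by
  by_contra! hcon
  have k1 := key_one q LA HA (Γ.map (AddMonoidHom.fst A B)) hA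
  have k2 := key_one q LB HB (Γ.map (AddMonoidHom.snd A B)) hB
  set XA := LA ⊓ (HA.map (nsmulAddMonoidHom q)).comap (nsmulAddMonoidHom q) with hXA
  set XB := LB ⊓ (HB.map (nsmulAddMonoidHom q)).comap (nsmulAddMonoidHom q) with hXB
  have hX : Γ ⊓ XA.comap (AddMonoidHom.fst A B) = Γ ⊓ XB.comap (AddMonoidHom.snd A B) := by
    ext c
    simp only [AddSubgroup.mem_inf, and_congr_right_iff]
    intro hc
    have := hqH (q • c) (nsmul_mem hc q)
    exact and_congr (hL c hc) this
  have m1 : Γ.map (AddMonoidHom.fst A B) ⊓ XA = (Γ ⊓ XA.comap (AddMonoidHom.fst A B)).map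
      (AddMonoidHom.fst A B) := by
    ext x
    constructor
    · rintro ⟨⟨c, hc, rfl⟩, hx⟩
      exact ⟨c, ⟨hc, hx⟩, rfl⟩
    · rintro ⟨c, ⟨hc, hx⟩, rfl⟩
      exact ⟨⟨c, hc, rfl⟩, hx⟩
  have m2 : Γ.map (AddMonoidHom.snd A B) ⊓ XB = (Γ ⊓ XB.comap (AddMonoidHom.snd A B)).map
      (AddMonoidHom.snd A B) := by
    ext x
    constructor
    · rintro ⟨⟨c, hc, rfl⟩, hx⟩
      exact ⟨c, ⟨hc, hx⟩, rfl⟩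
    · rintro ⟨c, ⟨hc, hx⟩, rfl⟩
      exact ⟨⟨c, hc, rfl⟩, hx⟩
  rw [m1, ← AddSubgroup.relIndex_comap, ← AddSubgroup.inf_relIndex_right] at k1
  rw [m2, ← AddSubgroup.relIndex_comap, ← AddSubgroup.inf_relIndex_right, ← hX] at k2
  set Γ' := Γ ⊓ XA.comap (AddMonoidHom.fst A B) with hΓ'
  have hY : HA.comap (AddMonoidHom.fst A B) ⊓ Γ' = HB.comap (AddMonoidHom.snd A B) ⊓ Γ' := by
    ext c
    simp only [AddSubgroup.mem_inf, and_congr_left_iff]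
    intro hc
    exact hH c hc.1
  rw [hY, hrel, ← k2] at k1
  have hfin' : Finite Γ' := (hfin.subset (fun x hx => hx.1 : (Γ' : Set (A × B)) ⊆ Γ)).to_subtype
  have hne : (HB.comap (AddMonoidHom.snd A B) ⊓ Γ').relIndex Γ' ≠ 0 := by
    intro h0
    have := AddSubgroup.relIndex_dvd_card (HB.comap (AddMonoidHom.snd A B) ⊓ Γ') Γ'
    rw [h0, zero_dvd_iff] at this
    exact Nat.card_pos.ne' this
  have k3 := Nat.eq_of_mul_eq_mul_left (Nat.pos_of_ne_zero hne) k1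
  have k4 : ((HB ⊔ Γ.map (AddMonoidHom.snd A B)) ⊓ (LB ⊓ (nsmulAddMonoidHom q).ker)).relIndex
      (LB ⊓ (nsmulAddMonoidHom q).ker) = 1 := by
    rw [AddSubgroup.relIndex_eq_one]
    refine le_inf ?_ le_rfl
    rintro w ⟨hw1, hw2⟩
    obtain ⟨c, hc, hcw⟩ := hcon w hw1 hw2
    have : w = (w + c.2) + (-c).2 := by simp
    rw [this]
    exact AddSubgroup.add_mem_sup hcw ⟨-c, neg_mem hc, rfl⟩
  rw [k4, AddSubgroup.relIndex_eq_one] at k3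
  have := (k3 ⟨hu, hqu⟩ : _).1
  obtain ⟨v, hv, s, ⟨c, hc, rfl⟩, hvs⟩ := AddSubgroup.mem_sup.1 this
  apply hun (-c) (neg_mem hc)
  rw [← hvs]
  simpa using hv


structure Good (Γ : AddSubgroup (A × B)) : Prop where
  fin : (Γ : Set (A × B)).Finite
  inj : ∀ c ∈ Γ, c.1 = 0 ↔ c.2 = 0
  ht : ∀ q : ℕ, q.Prime → ∀ α : Ordinal.{0}, ∀ c ∈ Γ, c.1 ∈ PP q α ↔ c.2 ∈ PP q α

lemma mem_ext {C : Type*} [AddCommGroup C] (Γ : AddSubgroup C) (q : ℕ) (hq : 0 < q) (e c : C)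
    (he : q • e ∈ Γ) (hc : c ∈ Γ ⊔ AddSubgroup.zmultiples e) :
    ∃ γ ∈ Γ, ∃ r : ℕ, r < q ∧ c = γ + r • e := by
  obtain ⟨γ, hγ, d, hd, rfl⟩ := AddSubgroup.mem_sup.1 hc
  obtain ⟨k, rfl⟩ := AddSubgroup.mem_zmultiples_iff.1 hd
  have hq' : (q : ℤ) ≠ 0 := by positivity
  have h1 := Int.emod_nonneg k hq'
  have h2 := Int.emod_lt_of_pos k (by positivity : (0 : ℤ) < q)
  refine ⟨γ + (k / q) • (q • e), add_mem hγ (zsmul_mem he _), (k % q).toNat, by omega, ?_⟩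
  have h3 : ((k % q).toNat : ℤ) = k % q := Int.toNat_of_nonneg h1
  rw [add_assoc, ← natCast_zsmul, ← natCast_zsmul, h3, ← mul_smul, ← add_smul]
  congr 2
  have := Int.emod_add_mul_ediv k q
  linarith

lemma extend {Γ : AddSubgroup (A × B)} (hΓ : Good Γ) {q : ℕ} (hq : q.Prime) (e : A × B)
    (he : q • e ∈ Γ) (h1 : ∀ d ∈ Γ, e.1 + d.1 ≠ 0) (h2 : ∀ d ∈ Γ, e.2 + d.2 ≠ 0)
    (h3 : ∀ α : Ordinal.{0}, ∀ d ∈ Γ, e.1 + d.1 ∈ PP q α ↔ e.2 + d.2 ∈ PP q α) :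
    Good (Γ ⊔ AddSubgroup.zmultiples e) := by
  have hj : ∀ γ ∈ Γ, ∀ r : ℕ, r < q → r ≠ 0 → ∃ j : ℕ, j.Coprime q ∧ ∃ d ∈ Γ,
      j • (γ + r • e) = e + d := by
    intro γ hγ r hr hr0
    have hcop : r.Coprime q := by
      rw [Nat.coprime_comm, hq.coprime_iff_not_dvd]
      exact Nat.not_dvd_of_pos_of_lt (Nat.pos_of_ne_zero hr0) hr
    obtain ⟨j, hj⟩ := Nat.exists_mul_mod_eq_one_of_coprime hcop hq.one_lt
    have hm := Nat.mod_add_div (r * j) q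
    rw [hj.2] at hm
    refine ⟨j, ?_, j • γ + ((r * j) / q) • (q • e),
      add_mem (nsmul_mem hγ _) (nsmul_mem he _), ?_⟩
    · rw [Nat.coprime_comm, hq.coprime_iff_not_dvd]
      intro hd
      have := Nat.mod_eq_zero_of_dvd (hd.mul_left r)
      omega
    · have h6 : (r * j) • e = e + ((r * j) / q) • (q • e) := by
        conv_lhs => rw [← hm]
        rw [add_smul, one_smul, mul_comm q, mul_smul]
      rw [smul_add, ← mul_smul, mul_comm j r, h6]
      abel
  refine ⟨?_, ?_, ?_⟩
  · refine ((hΓ.fin.prod (Set.finite_Iio q)).image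
      (fun p : (A × B) × ℕ => p.1 + p.2 • e)).subset ?_
    intro c hc
    obtain ⟨γ, hγ, r, hr, rfl⟩ := mem_ext Γ q hq.pos e c he hc
    exact ⟨(γ, r), ⟨hγ, hr⟩, rfl⟩
  · intro c hc
    obtain ⟨γ, hγ, r, hr, rfl⟩ := mem_ext Γ q hq.pos e c he hc
    by_cases hr0 : r = 0
    · subst hr0
      simpa using hΓ.inj γ hγ
    · obtain ⟨j, hjq, d, hd, hjd⟩ := hj γ hγ r hr hr0
      constructor
      · intro h
        exfalso
        apply h1 d hd
        have := congrArg Prod.fst hjd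
        rw [Prod.smul_fst, h] at this
        simpa using this.symm
      · intro h
        exfalso
        apply h2 d hd
        have := congrArg Prod.snd hjd
        rw [Prod.smul_snd, h] at this
        simpa using this.symm
  · intro p hp α c hc
    by_cases hpq : p = q
    · subst hpq
      obtain ⟨γ, hγ, r, hr, rfl⟩ := mem_ext Γ p hq.pos e c he hc
      by_cases hr0 : r = 0
      · subst hr0
        simpa using hΓ.ht p hp α γ hγ
      · obtain ⟨j, hjq, d, hd, hjd⟩ := hj γ hγ r hr hr0
        have i1 : (γ + r • e).1 ∈ PP p α ↔ e.1 + d.1 ∈ PP p α := by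
          rw [← Prod.fst_add e d, ← hjd, Prod.smul_fst]
          exact ⟨fun h => nsmul_mem h _, PP_div hjq α _⟩
        have i2 : (γ + r • e).2 ∈ PP p α ↔ e.2 + d.2 ∈ PP p α := by
          rw [← Prod.snd_add e d, ← hjd, Prod.smul_snd]
          exact ⟨fun h => nsmul_mem h _, PP_div hjq α _⟩
        rw [i1, i2, h3 α d hd]
    · have hcop : q.Coprime p := (Nat.coprime_primes hq hp).2 (Ne.symm hpq)
      have hqc : q • c ∈ Γ := by
        obtain ⟨γ, hγ, r, hr, rfl⟩ := mem_ext Γ q hq.pos e c he hc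
        rw [smul_add, smul_comm]
        exact add_mem (nsmul_mem hγ _) (nsmul_mem he _)
      have := hΓ.ht p hp α _ hqc
      have i1 : c.1 ∈ PP p α ↔ q • c.1 ∈ PP p α := ⟨fun h => nsmul_mem h _, PP_div hcop α _⟩
      have i2 : c.2 ∈ PP p α ↔ q • c.2 ∈ PP p α := ⟨fun h => nsmul_mem h _, PP_div hcop α _⟩
      rw [i1, i2]
      exact this

lemma exists_ht {q : ℕ} {l : Ordinal.{0}} {x : A} (h : x ∉ PP q l) :
    ∃ α : Ordinal.{0}, x ∈ PP q α ∧ x ∉ PP q (Order.succ α) := by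
  by_contra! hcon
  apply h
  induction l using WellFoundedLT.induction with
  | _ l ih =>
    rw [mem_PP]
    intro β hβ
    have : x ∈ PP q β := by
      by_contra hx
      exact hx (ih β hβ hx)
    exact mem_PP_succ.1 (hcon β this)

lemma find_partner [Countable A] [Countable B] (hI : Inv A B) {Γ : AddSubgroup (A × B)}
    (hΓ : Good Γ) {q : ℕ} (hq : q.Prime) (x : A) (hx : ∃ c ∈ Γ, c.1 = q • x)
    (hxS : ∀ c ∈ Γ, x + c.1 ≠ 0) :
    ∃ d0 ∈ Γ, ∃ w : B, ((q • (x + d0.1), q • w) : A × B) ∈ Γ ∧ (∀ d ∈ Γ, w + d.2 ≠ 0) ∧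
      ∀ α : Ordinal.{0}, ∀ d ∈ Γ, x + d0.1 + d.1 ∈ PP q α ↔ w + d.2 ∈ PP q α := by
  obtain ⟨lA, hlA⟩ := exists_stable (A := A) q
  obtain ⟨lB, hlB⟩ := exists_stable (A := B) q
  obtain ⟨l, hA, hB⟩ : ∃ l : Ordinal.{0}, (∀ β, PP (A := A) q l ≤ PP q β) ∧
      (∀ β, PP (A := B) q l ≤ PP q β) := by
    refine ⟨max lA lB, fun β => ?_, fun β => ?_⟩
    · rw [hlA _ (le_max_left _ _), ← hlA _ (le_max_left lA β)]
      exact PP_anti (le_max_right _ _)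
    · rw [hlB _ (le_max_right _ _), ← hlB _ (le_max_left lB β)]
      exact PP_anti (le_max_right _ _)
  have hpart : ∀ d ∈ Γ, ∃ b : B, ((q • (x + d.1), b) : A × B) ∈ Γ := by
    intro d hd
    obtain ⟨c, hc, hcx⟩ := hx
    refine ⟨c.2 + q • d.2, ?_⟩
    have := add_mem hc (nsmul_mem hd q)
    convert this using 1
    ext <;> simp [hcx]
  have both : ∀ (P : AddSubgroup A) (Q : AddSubgroup B) (y : A) (w : B) (d : A × B),
      y ∈ P → w ∈ Q → (d.1 ∈ P ↔ d.2 ∈ Q) → (y + d.1 ∈ P ↔ w + d.2 ∈ Q) := by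
    intro P Q y w d hy hw h
    rw [P.add_mem_cancel_left hy, Q.add_mem_cancel_left hw, h]
  have neg : ∀ (Q : AddSubgroup B) (w : B), (∀ d ∈ Γ, w + d.2 ∉ Q) → ∀ d ∈ Γ, w + d.2 ≠ 0 := by
    intro Q w h d hd h0
    exact h d hd (h0 ▸ Q.zero_mem)
  by_cases hI1 : ∃ d0 ∈ Γ, x + d0.1 ∈ PP q l
  · obtain ⟨d0, hd0, hx0⟩ := hI1
    obtain ⟨b, hb⟩ := hpart d0 hd0
    have hb1 : b ∈ PP q (Order.succ l) := (hΓ.ht q hq _ _ hb).1 (smul_mem_PP hx0)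
    obtain ⟨w0, hw0, rfl⟩ := mem_PP_succ.1 hb1
    by_cases hw : ∀ d ∈ Γ, w0 + d.2 ≠ 0
    · refine ⟨d0, hd0, w0, hb, hw, fun α d hd => ?_⟩
      exact both _ _ _ _ _ (hA α hx0) (hB α hw0) (hΓ.ht q hq α d hd)
    · push Not at hw
      obtain ⟨d1, hd1, hw1⟩ := hw
      have hd12 : d1.2 ∈ PP q l := by
        rw [← (PP q l).add_mem_cancel_left hw0, hw1]
        exact zero_mem _
      have hd11 : d1.1 ∈ PP q l := (hΓ.ht q hq l d1 hd1).2 hd12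
      have hu : x + (d0 + d1).1 ∈ PP q l := by
        rw [Prod.fst_add, ← add_assoc]
        exact add_mem hx0 hd11
      have hqu : q • (x + (d0 + d1).1) = 0 := by
        have := (hΓ.inj _ (add_mem hb (nsmul_mem hd1 q))).2
          (by simp only [Prod.snd_add, Prod.smul_snd]; rw [← smul_add, hw1, smul_zero])
        simp only [Prod.fst_add, Prod.smul_fst] at this
        rw [← smul_add] at this
        rw [Prod.fst_add, ← add_assoc, this]
      obtain ⟨w, hwl, hqw, hwn⟩ := key Γ hΓ.fin q (PP q l) ⊥ (PP q l) ⊥ bot_le bot_le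
        (hΓ.ht q hq l) (by simpa only [AddSubgroup.mem_bot] using hΓ.inj)
        (by simpa only [AddSubgroup.map_bot, AddSubgroup.mem_bot] using hΓ.inj) (hI q l).2
        (x + (d0 + d1).1) hu hqu (by
          intro c hc h0
          rw [AddSubgroup.mem_bot, add_assoc] at h0
          exact hxS _ (add_mem (add_mem hd0 hd1) hc) h0)
      refine ⟨d0 + d1, add_mem hd0 hd1, w, ?_, neg _ _ hwn, fun α d hd => ?_⟩
      · rw [hqu, hqw]
        exact zero_mem Γ
      · exact both _ _ _ _ _ (hA α hu) (hB α hwl) (hΓ.ht q hq α d hd)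
  · push Not at hI1
    have := fun d : Γ => exists_ht (hI1 d.1 d.2)
    choose g hg hg' using this
    have : Finite Γ := hΓ.fin.to_subtype
    obtain ⟨m, hm⟩ := Finite.exists_max g
    obtain ⟨α, hα⟩ : ∃ α, α = g m := ⟨_, rfl⟩
    have hxm : x + m.1.1 ∈ PP q α := hα ▸ hg m
    have hmax : ∀ d ∈ Γ, x + d.1 ∉ PP q (Order.succ α) := by
      intro d hd h
      exact hg' ⟨d, hd⟩ (PP_anti (Order.succ_le_succ (hα ▸ hm ⟨d, hd⟩)) h)
    have fin : ∀ d0 ∈ Γ, x + d0.1 ∈ PP q α → ∀ w : B, ((q • (x + d0.1), q • w) : A × B) ∈ Γ →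
        w ∈ PP q α → (∀ d ∈ Γ, w + d.2 ∉ PP q (Order.succ α)) →
        ∃ d0 ∈ Γ, ∃ w : B, ((q • (x + d0.1), q • w) : A × B) ∈ Γ ∧ (∀ d ∈ Γ, w + d.2 ≠ 0) ∧
      ∀ α : Ordinal.{0}, ∀ d ∈ Γ, x + d0.1 + d.1 ∈ PP q α ↔ w + d.2 ∈ PP q α := by
      intro d0 hd0 hx0 w hw hwα hwn
      refine ⟨d0, hd0, w, hw, neg _ _ hwn, fun β d hd => ?_⟩
      rcases le_or_gt β α with h | h
      · exact both _ _ _ _ _ (PP_anti h hx0) (PP_anti h hwα) (hΓ.ht q hq β d hd)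
      · have h' := Order.succ_le_of_lt h
        refine iff_of_false (fun h1 => ?_) (fun h1 => hwn d hd (PP_anti h' h1))
        rw [add_assoc] at h1
        exact hmax _ (add_mem hd0 hd) (PP_anti h' h1)
    by_cases hc2 : ∃ d1 ∈ Γ, x + d1.1 ∈ PP q α ∧
        q • (x + d1.1) ∈ PP q (Order.succ (Order.succ α))
    · obtain ⟨d1, hd1, hx1, hqx⟩ := hc2
      obtain ⟨v, hv, hvx⟩ := mem_PP_succ.1 hqx
      have hle : PP (A := A) q (Order.succ α) ≤ PP q α :=
        PP_anti (Order.le_succ α)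
      have hle' : PP (A := B) q (Order.succ α) ≤ PP q α :=
        PP_anti (Order.le_succ α)
      obtain ⟨w1, hw1, hqw1, hwn⟩ := key Γ hΓ.fin q (PP q α) (PP q (Order.succ α)) (PP q α)
        (PP q (Order.succ α)) hle hle' (hΓ.ht q hq α) (hΓ.ht q hq _)
        (by
          intro c hc
          have := hΓ.ht q hq (Order.succ (Order.succ α)) c hc
          rw [mem_PP_succ, mem_PP_succ] at this
          exact this) (hI q α).1 (x + d1.1 - v) (sub_mem hx1 (hle hv))
        (by rw [smul_sub, hvx, sub_self])
        (by
          intro c hc h0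
          have h4 := add_mem h0 hv
          apply hmax _ (add_mem hd1 hc)
          convert h4 using 1
          simp only [Prod.fst_add]
          abel)
      obtain ⟨b, hb⟩ := hpart d1 hd1
      have hb1 := (hΓ.ht q hq _ _ hb).1 hqx
      obtain ⟨v', hv', rfl⟩ := mem_PP_succ.1 hb1
      refine fin d1 hd1 hx1 (w1 + v') ?_ (add_mem hw1 (hle' hv')) ?_
      · rw [smul_add q w1, hqw1, zero_add]
        exact hb
      · intro d hd h0
        apply hwn d hd
        have h4 := sub_mem h0 hv'
        convert h4 using 1
        abel
    · push Not at hc2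
      obtain ⟨b, hb⟩ := hpart m.1 m.2
      have hb1 := (hΓ.ht q hq _ _ hb).1 (smul_mem_PP hxm)
      obtain ⟨w, hw, rfl⟩ := mem_PP_succ.1 hb1
      refine fin m.1 m.2 hxm w hb hw ?_
      intro d hd h0
      have hd2 : d.2 ∈ PP q α := by
        rw [← (PP q α).add_mem_cancel_left hw]
        exact PP_anti (Order.le_succ α) h0
      have hd1 := (hΓ.ht q hq _ _ hd).2 hd2
      apply hc2 _ (add_mem m.2 hd)
      · rw [Prod.fst_add, ← add_assoc]
        exact add_mem hxm hd1
      · have h5 := (hΓ.ht q hq (Order.succ (Order.succ α)) _ (add_mem hb (nsmul_mem hd q))).2 (by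
          simp only [Prod.snd_add, Prod.smul_snd]
          rw [← smul_add]
          exact smul_mem_PP h0)
        simp only [Prod.fst_add, Prod.smul_fst] at h5
        rw [← smul_add, add_assoc] at h5
        exact h5

lemma step_prime [Countable A] [Countable B] (hI : Inv A B) {Γ : AddSubgroup (A × B)}
    (hΓ : Good Γ) {q : ℕ} (hq : q.Prime) (x : A) (hx : ∃ c ∈ Γ, c.1 = q • x) :
    ∃ Γ' : AddSubgroup (A × B), Γ ≤ Γ' ∧ Good Γ' ∧ ∃ c ∈ Γ', c.1 = x := by
  by_cases hxS : ∀ c ∈ Γ, x + c.1 ≠ 0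
  · obtain ⟨d0, hd0, w, h1, h2, h3⟩ := find_partner hI hΓ hq x hx hxS
    refine ⟨Γ ⊔ AddSubgroup.zmultiples (x + d0.1, w), le_sup_left,
      extend hΓ hq _ h1 ?_ h2 h3, (x + d0.1, w) - d0, ?_, by simp⟩
    · intro d hd
      have := hxS _ (add_mem hd0 hd)
      rwa [Prod.fst_add, ← add_assoc] at this
    · exact sub_mem (AddSubgroup.mem_sup_right (AddSubgroup.mem_zmultiples _))
        (AddSubgroup.mem_sup_left hd0)
  · push Not at hxS
    obtain ⟨c, hc, h0⟩ := hxS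
    exact ⟨Γ, le_rfl, hΓ, -c, neg_mem hc, by
      rw [Prod.fst_neg, neg_eq_iff_add_eq_zero, add_comm, h0]⟩

lemma step [Countable A] [Countable B] (hI : Inv A B) (n : ℕ) (hn : n ≠ 0) :
    ∀ {Γ : AddSubgroup (A × B)} (_ : Good Γ) (x : A) (_ : ∃ c ∈ Γ, c.1 = n • x),
    ∃ Γ' : AddSubgroup (A × B), Γ ≤ Γ' ∧ Good Γ' ∧ ∃ c ∈ Γ', c.1 = x := by
  induction n using induction_on_primes with
  | zero => exact absurd rfl hn
  | one =>
    intro Γ hΓ x hx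
    exact ⟨Γ, le_rfl, hΓ, by simpa using hx⟩
  | prime_mul p a hp ih =>
    intro Γ hΓ x hx
    have ha : a ≠ 0 := by rintro rfl; simp at hn
    rw [mul_smul] at hx
    obtain ⟨Γ1, h1, hΓ1, hx1⟩ := step_prime hI hΓ hp (a • x) hx
    obtain ⟨Γ2, h2, hΓ2, hx2⟩ := ih ha hΓ1 x hx1
    exact ⟨Γ2, h1.trans h2, hΓ2, hx2⟩

lemma step_left [Countable A] [Countable B] (hI : Inv A B) (hA : AddMonoid.IsTorsion A)
    {Γ : AddSubgroup (A × B)} (hΓ : Good Γ) (x : A) :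
    ∃ Γ' : AddSubgroup (A × B), Γ ≤ Γ' ∧ Good Γ' ∧ ∃ c ∈ Γ', c.1 = x := by
  refine step hI (addOrderOf x) (hA x).addOrderOf_pos.ne' hΓ x ⟨0, zero_mem _, ?_⟩
  rw [addOrderOf_nsmul_eq_zero]
  rfl

lemma Good.swap {Γ : AddSubgroup (A × B)} (hΓ : Good Γ) :
    Good (Γ.comap (AddEquiv.prodComm (M := B) (N := A)).toAddMonoidHom) := by
  refine ⟨?_, ?_, ?_⟩
  · exact Set.Finite.preimage (f := (AddEquiv.prodComm (M := B) (N := A))) (s := (Γ : Set (A × B)))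
      (AddEquiv.prodComm (M := B) (N := A)).injective.injOn hΓ.fin
  · intro c hc
    exact (hΓ.inj _ hc).symm
  · intro q hq α c hc
    exact (hΓ.ht q hq α _ hc).symm

lemma step_right [Countable A] [Countable B] (hI : Inv A B) (hB : AddMonoid.IsTorsion B)
    {Γ : AddSubgroup (A × B)} (hΓ : Good Γ) (y : B) :
    ∃ Γ' : AddSubgroup (A × B), Γ ≤ Γ' ∧ Good Γ' ∧ ∃ c ∈ Γ', c.2 = y := by
  obtain ⟨Γ', h1, h2, c, hc, hcy⟩ := step_left hI.symm hB hΓ.swap y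
  refine ⟨_, ?_, h2.swap, c.swap, hc, hcy⟩
  intro d hd
  exact h1 (show (d.swap : B × A) ∈ _ from hd)

lemma good_bot : Good (⊥ : AddSubgroup (A × B)) := by
  refine ⟨by simp, ?_, ?_⟩
  · intro c hc
    rw [AddSubgroup.mem_bot] at hc
    simp [hc]
  · intro q _ α c hc
    rw [AddSubgroup.mem_bot] at hc
    simp [hc]

theorem ulm [Countable A] [Countable B] (hI : Inv A B) (hA : AddMonoid.IsTorsion A)
    (hB : AddMonoid.IsTorsion B) : Nonempty (A ≃+ B) := by
  let P := {Γ : AddSubgroup (A × B) // Good Γ}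
  let 𝒟 : A ⊕ B → Order.Cofinal P := fun i =>
    { carrier := {Γ | Sum.elim (fun a => ∃ c ∈ Γ.1, c.1 = a) (fun b => ∃ c ∈ Γ.1, c.2 = b) i}
      isCofinal := by
        intro Γ
        rcases i with a | b
        · obtain ⟨Γ', h1, h2, h3⟩ := step_left hI hA Γ.2 a
          exact ⟨⟨Γ', h2⟩, h3, h1⟩
        · obtain ⟨Γ', h1, h2, h3⟩ := step_right hI hB Γ.2 b
          exact ⟨⟨Γ', h2⟩, h3, h1⟩ }
  let _ : Encodable (A ⊕ B) := Encodable.ofCountable _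
  let I := Order.idealOfCofinals (⟨⊥, good_bot⟩ : P) 𝒟
  have hl : ∀ a : A, ∃ b : B, ∃ Γ ∈ I, ((a, b) : A × B) ∈ Γ.1 := by
    intro a
    obtain ⟨Γ, ⟨c, hc, rfl⟩, h2⟩ :=
      Order.cofinal_meets_idealOfCofinals (⟨⊥, good_bot⟩ : P) 𝒟 (Sum.inl a)
    exact ⟨c.2, Γ, h2, hc⟩
  have hr : ∀ b : B, ∃ a : A, ∃ Γ ∈ I, ((a, b) : A × B) ∈ Γ.1 := by
    intro b
    obtain ⟨Γ, ⟨c, hc, rfl⟩, h2⟩ :=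
      Order.cofinal_meets_idealOfCofinals (⟨⊥, good_bot⟩ : P) 𝒟 (Sum.inr b)
    exact ⟨c.1, Γ, h2, hc⟩
  choose f hf using hl
  have hdir : ∀ c d : A × B, (∃ Γ ∈ I, c ∈ Γ.1) → (∃ Γ ∈ I, d ∈ Γ.1) →
      ∃ Γ ∈ I, c ∈ Γ.1 ∧ d ∈ Γ.1 := by
    rintro c d ⟨Γ1, h1, hc⟩ ⟨Γ2, h2, hd⟩
    obtain ⟨Γ, h, h3, h4⟩ := I.directed Γ1 h1 Γ2 h2
    exact ⟨Γ, h, h3 hc, h4 hd⟩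
  have huniq : ∀ c d : A × B, (∃ Γ ∈ I, c ∈ Γ.1) → (∃ Γ ∈ I, d ∈ Γ.1) →
      (c.1 = d.1 ↔ c.2 = d.2) := by
    intro c d hc hd
    obtain ⟨Γ, _, h1, h2⟩ := hdir c d hc hd
    have := Γ.2.inj _ (sub_mem h1 h2)
    rwa [Prod.fst_sub, Prod.snd_sub, sub_eq_zero, sub_eq_zero] at this
  have hadd : ∀ a b, f (a + b) = f a + f b := by
    intro a b
    obtain ⟨Γ, h, h1, h2⟩ := hdir _ _ (hf a) (hf b)
    exact (huniq (a + b, f (a + b)) (a + b, f a + f b) (hf _) ⟨Γ, h, add_mem h1 h2⟩).1 rfl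
  refine ⟨AddEquiv.ofBijective (AddMonoidHom.mk' f hadd) ⟨?_, ?_⟩⟩
  · intro a b hab
    exact (huniq _ _ (hf a) (hf b)).2 hab
  · intro b
    obtain ⟨a, ha⟩ := hr b
    exact ⟨a, (huniq (a, f a) (a, b) (hf a) ha).1 rfl⟩

end basic
end Ulm

/-- If `A` and `B` are countable torsion abelian groups and the direct sum of `2^n`
copies of `A` is isomorphic to the direct sum of `2^n` copies of `B` (for some `n ≥ 1`),
then `A ≅ B`. -/
theorem cancel_pow_two_of_countable_torsion
    (A B : Type*) [AddCommGroup A] [AddCommGroup B] [Countable A] [Countable B]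
    (hA : AddMonoid.IsTorsion A) (hB : AddMonoid.IsTorsion B)
    (n : ℕ) (hn : 1 ≤ n)
    (h : Nonempty ((Fin (2 ^ n) → A) ≃+ (Fin (2 ^ n) → B))) :
    Nonempty (A ≃+ B) := by
  obtain ⟨e⟩ := h
  exact Ulm.ulm (Ulm.inv_of_pow (by positivity) e) hA hB
end

section
/- Let Γ be a group and let φ : Γ → ℤ/2 * ℤ/2 be a surjective group homomorphism onto the free product of two copies of ℤ/2, with a and b denoting the images in ℤ/2 * ℤ/2 of the generators of the two free factors. Set F = ker φ, G_0 = φ^{-1}(⟨a⟩) and G_1 = φ^{-1}(⟨b⟩). Then F has index 2 in both G_0 and G_1, Γ is generated by G_0 ∪ G_1, and the canonical homomorphism from the amalgamated free product G_0 *_F G_1 (the pushout of the inclusions F ↪ G_0 and F ↪ G_1 in the category of groups) to Γ is an isomorphism. -/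
open Monoid

/-- The infinite dihedral group `D_∞ = ℤ/2 * ℤ/2`, the free product of two copies
of `ℤ/2`. -/
abbrev DInf : Type := Coprod (Multiplicative (ZMod 2)) (Multiplicative (ZMod 2))

/-- The image `a` of the generator of the first free factor. -/
def genA : DInf := Coprod.inl (Multiplicative.ofAdd (1 : ZMod 2))

/-- The image `b` of the generator of the second free factor. -/
def genB : DInf := Coprod.inr (Multiplicative.ofAdd (1 : ZMod 2))

variable {Γ : Type*} [Group Γ] (φ : Γ →* DInf)

/-- `G₀ = φ⁻¹⟨a⟩`. -/
def Gzero : Subgroup Γ := (Subgroup.zpowers genA).comap φ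

/-- `G₁ = φ⁻¹⟨b⟩`. -/
def Gone : Subgroup Γ := (Subgroup.zpowers genB).comap φ

lemma ker_le_Gzero : φ.ker ≤ Gzero φ := fun x hx => by
  simp only [Gzero, Subgroup.mem_comap, MonoidHom.mem_ker.mp hx]; exact one_mem _

lemma ker_le_Gone : φ.ker ≤ Gone φ := fun x hx => by
  simp only [Gone, Subgroup.mem_comap, MonoidHom.mem_ker.mp hx]; exact one_mem _

/-- The family `i ↦ G_i` indexed by `Bool` (with `true ↦ G₀`, `false ↦ G₁`). -/
def Gfam : Bool → Subgroup Γ := fun i => if i then Gzero φ else Gone φ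

lemma ker_le_Gfam : ∀ i : Bool, φ.ker ≤ Gfam φ i := by
  intro i
  cases i
  · exact ker_le_Gone φ
  · exact ker_le_Gzero φ

/-- The inclusions `F = ker φ → G_i`. -/
def inclFam : ∀ i : Bool, φ.ker →* (Gfam φ i) := fun i =>
  Subgroup.inclusion (ker_le_Gfam φ i)

/-- The canonical homomorphism from the amalgamated free product `G₀ *_F G₁`
(the pushout of the inclusions `F ↪ G₀` and `F ↪ G₁` in the category of groups)
to `Γ`. -/
def canonicalHom : PushoutI (inclFam φ) →* Γ :=
  PushoutI.lift (fun i => (Gfam φ i).subtype) φ.ker.subtype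
    (fun i => Subgroup.subtype_comp_inclusion (ker_le_Gfam φ i))

lemma z2_cases (x : Multiplicative (ZMod 2)) : x = 1 ∨ x = Multiplicative.ofAdd (1 : ZMod 2) := by
  revert x; decide

/-- The hom from `ℤ/2` determined by an involution. -/
def z2Hom {Q : Type*} [Group Q] (q : Q) (hq : q * q = 1) : Multiplicative (ZMod 2) →* Q :=
  MonoidHom.mk' (fun x => if x = 1 then 1 else q) (by
    have h1 : (Multiplicative.ofAdd (1 : ZMod 2)) ≠ 1 := by decide
    have h2 : (Multiplicative.ofAdd (1 : ZMod 2)) * Multiplicative.ofAdd (1 : ZMod 2) = 1 := by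
      decide
    intro x y
    rcases z2_cases x with rfl | rfl <;> rcases z2_cases y with rfl | rfl <;>
      simp only [h1, h2, hq, if_true, if_false, mul_one, one_mul])

lemma z2Hom_gen {Q : Type*} [Group Q] (q : Q) (hq : q * q = 1) :
    z2Hom q hq (Multiplicative.ofAdd (1 : ZMod 2)) = q := by
  have h1 : (Multiplicative.ofAdd (1 : ZMod 2)) ≠ 1 := by decide
  simp only [z2Hom, MonoidHom.mk'_apply, h1, if_false]

lemma orderOf_z2 : orderOf (Multiplicative.ofAdd (1 : ZMod 2)) = 2 :=
  orderOf_eq_prime (by decide) (by decide)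

lemma orderOf_genA : orderOf genA = 2 := by
  rw [genA, orderOf_injective _ Coprod.inl_injective, orderOf_z2]

lemma orderOf_genB : orderOf genB = 2 := by
  rw [genB, orderOf_injective _ Coprod.inr_injective, orderOf_z2]

lemma zpowers_cases {G : Type*} [Group G] {g x : G} (hg : orderOf g = 2)
    (hx : x ∈ Subgroup.zpowers g) : x = 1 ∨ x = g := by
  obtain ⟨k, rfl⟩ := Subgroup.mem_zpowers_iff.mp hx
  have hg2 : g ^ (2 : ℤ) = 1 := by
    have := pow_orderOf_eq_one g
    rw [hg] at this
    exact_mod_cast this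
  rcases Int.even_or_odd' k with ⟨m, rfl | rfl⟩
  · left; rw [zpow_mul, hg2, one_zpow]
  · right; rw [zpow_add, zpow_mul, hg2, one_zpow, one_mul, zpow_one]

lemma ker_index (hφ : Function.Surjective φ) (g : DInf) (hg : orderOf g = 2) :
    ((φ.ker).subgroupOf ((Subgroup.zpowers g).comap φ)).index = 2 := by
  change (φ.ker).relIndex _ = 2
  rw [← MonoidHom.comap_bot, Subgroup.relIndex_comap, Subgroup.map_comap_eq_self_of_surjective hφ,
    Subgroup.relIndex_bot_left, Nat.card_zpowers, hg]

lemma dinf_closure (H : Subgroup DInf) (ha : genA ∈ H) (hb : genB ∈ H) : H = ⊤ := by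
  rw [eq_top_iff]
  rintro x -
  induction x using Coprod.induction_on with
  | inl x =>
    rcases z2_cases x with rfl | rfl
    · simp
    · exact ha
  | inr x =>
    rcases z2_cases x with rfl | rfl
    · simp
    · exact hb
  | mul x y hx hy => exact mul_mem hx hy

lemma sup_top (hφ : Function.Surjective φ) : Gzero φ ⊔ Gone φ = ⊤ := by
  have h : (Gzero φ ⊔ Gone φ).map φ = ⊤ := by
    rw [Subgroup.map_sup, Gzero, Gone, Subgroup.map_comap_eq_self_of_surjective hφ,
      Subgroup.map_comap_eq_self_of_surjective hφ]
    exact dinf_closure _ (Subgroup.mem_sup_left (Subgroup.mem_zpowers _))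
      (Subgroup.mem_sup_right (Subgroup.mem_zpowers _))
  have h2 := Subgroup.comap_map_eq_self (f := φ) ((ker_le_Gzero φ).trans
    (le_sup_left (b := Gone φ)))
  rw [← h2, h, Subgroup.comap_top]

lemma canonicalHom_of (i : Bool) (g : Gfam φ i) :
    canonicalHom φ (PushoutI.of i g) = g := by
  have h := PushoutI.lift_of (φ := inclFam φ) (fun i => (Gfam φ i).subtype) φ.ker.subtype
    (fun i => Subgroup.subtype_comp_inclusion (ker_le_Gfam φ i)) (i := i) g
  exact h

lemma canonicalHom_base (g : φ.ker) :
    canonicalHom φ (PushoutI.base _ g) = g :=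
  PushoutI.lift_base _ _ _ g

lemma canonicalHom_surj (hφ : Function.Surjective φ) :
    Function.Surjective (canonicalHom φ) := by
  rw [← MonoidHom.range_eq_top, eq_top_iff, ← sup_top φ hφ]
  refine sup_le ?_ ?_
  · intro x hx
    exact ⟨PushoutI.of true ⟨x, hx⟩, canonicalHom_of φ true ⟨x, hx⟩⟩
  · intro x hx
    exact ⟨PushoutI.of false ⟨x, hx⟩, canonicalHom_of φ false ⟨x, hx⟩⟩

lemma base_conj (x : PushoutI (inclFam φ)) (n : φ.ker) :
    ∃ m : φ.ker, x * PushoutI.base (inclFam φ) n * x⁻¹ = PushoutI.base (inclFam φ) m := by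
  induction x using PushoutI.induction_on generalizing n with
  | of i g =>
    refine ⟨⟨g * n * (g : Γ)⁻¹, (inferInstance : φ.ker.Normal).conj_mem _ n.2 _⟩, ?_⟩
    rw [← PushoutI.of_apply_eq_base _ i, ← PushoutI.of_apply_eq_base _ i, ← map_mul, ← map_inv,
      ← map_mul]
    rfl
  | base h => exact ⟨h * n * h⁻¹, by simp⟩
  | mul x y hx hy =>
    obtain ⟨m, hm⟩ := hy n
    obtain ⟨k, hk⟩ := hx m
    refine ⟨k, ?_⟩
    rw [← hk, ← hm]
    group

lemma base_range_normal : (PushoutI.base (inclFam φ)).range.Normal := by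
  constructor
  rintro _ ⟨n, rfl⟩ x
  obtain ⟨m, hm⟩ := base_conj φ x n
  exact ⟨m, hm.symm⟩

lemma ker_le_base (hφ : Function.Surjective φ) (x : PushoutI (inclFam φ))
    (hx : φ (canonicalHom φ x) = 1) : x ∈ (PushoutI.base (inclFam φ)).range := by
  have := base_range_normal φ
  let N := (PushoutI.base (inclFam φ)).range
  let q : PushoutI (inclFam φ) →* _ ⧸ N := QuotientGroup.mk' N
  -- elements of the factors with equal images agree modulo `N`
  have key : ∀ (i : Bool) (g h : Gfam φ i), φ g = φ h →
      q (PushoutI.of i g) = q (PushoutI.of i h) := by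
    intro i g h e
    apply QuotientGroup.eq.mpr
    have hk : (g : Γ)⁻¹ * h ∈ φ.ker := by
      rw [MonoidHom.mem_ker, map_mul, map_inv, e, inv_mul_cancel]
    refine ⟨⟨_, hk⟩, ?_⟩
    rw [← PushoutI.of_apply_eq_base _ i, ← map_inv, ← map_mul]
    rfl
  obtain ⟨g0, h0⟩ := hφ genA
  obtain ⟨g1, h1⟩ := hφ genB
  have m0 : g0 ∈ Gfam φ true := by
    change φ g0 ∈ Subgroup.zpowers genA
    rw [h0]; exact Subgroup.mem_zpowers _
  have m1 : g1 ∈ Gfam φ false := by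
    change φ g1 ∈ Subgroup.zpowers genB
    rw [h1]; exact Subgroup.mem_zpowers _
  have hA : genA * genA = 1 := by
    have := pow_orderOf_eq_one genA
    rwa [orderOf_genA, sq] at this
  have hB : genB * genB = 1 := by
    have := pow_orderOf_eq_one genB
    rwa [orderOf_genB, sq] at this
  have s0 : q (PushoutI.of true ⟨g0, m0⟩) * q (PushoutI.of true ⟨g0, m0⟩) = 1 := by
    rw [← map_mul, ← map_mul, key true _ 1 (by simp [h0, hA]), map_one, map_one]
  have s1 : q (PushoutI.of false ⟨g1, m1⟩) * q (PushoutI.of false ⟨g1, m1⟩) = 1 := by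
    rw [← map_mul, ← map_mul, key false _ 1 (by simp [h1, hB]), map_one, map_one]
  let s : DInf →* _ ⧸ N := Coprod.lift (z2Hom _ s0) (z2Hom _ s1)
  have sA : s genA = q (PushoutI.of true ⟨g0, m0⟩) := by
    simp only [s, genA, Coprod.lift_apply_inl, z2Hom_gen]
  have sB : s genB = q (PushoutI.of false ⟨g1, m1⟩) := by
    simp only [s, genB, Coprod.lift_apply_inr, z2Hom_gen]
  have comm : (s.comp φ).comp (canonicalHom φ) = q := by
    apply PushoutI.hom_ext_nonempty
    intro i
    ext g
    simp only [MonoidHom.comp_apply, canonicalHom_of]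
    cases i with
    | true =>
      rcases zpowers_cases orderOf_genA (show φ g ∈ Subgroup.zpowers genA from g.2) with e | e
      · rw [key true g 1 (by simp [e]), e, map_one, map_one, map_one]
      · rw [key true g ⟨g0, m0⟩ (by rw [e, h0]), e, sA]
    | false =>
      rcases zpowers_cases orderOf_genB (show φ g ∈ Subgroup.zpowers genB from g.2) with e | e
      · rw [key false g 1 (by simp [e]), e, map_one, map_one, map_one]
      · rw [key false g ⟨g1, m1⟩ (by rw [e, h1]), e, sB]
  have := DFunLike.congr_fun comm x
  simp only [MonoidHom.comp_apply, hx, map_one] at this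
  exact (QuotientGroup.eq_one_iff x).mp this.symm

/-- If `φ : Γ → ℤ/2 * ℤ/2` is an epimorphism with kernel `F`, and
`G₀ = φ⁻¹⟨a⟩`, `G₁ = φ⁻¹⟨b⟩`, then `F` has index `2` in both `G₀` and `G₁`,
`Γ` is generated by `G₀ ∪ G₁`, and the canonical homomorphism
`G₀ *_F G₁ → Γ` is an isomorphism. -/
theorem canonicalHom_bijective (hφ : Function.Surjective φ) :
    ((φ.ker).subgroupOf (Gzero φ)).index = 2 ∧
    ((φ.ker).subgroupOf (Gone φ)).index = 2 ∧
    Gzero φ ⊔ Gone φ = ⊤ ∧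
    Function.Bijective (canonicalHom φ) := by
  refine ⟨ker_index φ hφ genA orderOf_genA, ker_index φ hφ genB orderOf_genB, sup_top φ hφ, ?_,
    canonicalHom_surj φ hφ⟩
  rw [injective_iff_map_eq_one]
  intro x hx
  obtain ⟨f, rfl⟩ := ker_le_base φ hφ x (by rw [hx, map_one])
  rw [canonicalHom_base] at hx
  have : f = 1 := Subtype.ext hx
  rw [this, map_one]
end
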